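/- Let n ≥ 1 and k ≥ 1 be integers. Every extreme point of the convex body S̃q is of the form g² − r^{2k} for some g ∈ P_{n,k} with ∫_{S^{n-1}} g² dσ = 1. -/

import Mathlib

/-!
If `f + r^{2k} = ∑ gᵢ²`, integrating over the sphere gives `∑ aᵢ = 1` with `aᵢ = ∫ gᵢ² dσ ≥ 0`,
so some `aⱼ` lies in `(0, 1]`. For nonnegative weights `v` with `∑ vᵢ aᵢ = 1` the form
`∑ vᵢ gᵢ² - r^{2k}` again lies in `S̃q` (`weighted_mem_Sqtilde`). With `t = aⱼ / 2` the constant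
weight `1` is the proper convex combination `t v + (1 - t) w` of the weight `v` having the single
nonzero entry `vⱼ = 1 / aⱼ` and of `w = (1 - eⱼ / 2) / (1 - t)`. Hence an extreme point `f` equals
`gⱼ² / aⱼ - r^{2k}`. Taking `t = aⱼ / 2` rather than `t = aⱼ` covers `aⱼ = 1` as well, so it is
never needed that a form with vanishing `L²(σ)` norm is zero.
-/

open MeasureTheory MvPolynomial
open scoped ENNReal RealInnerProductSpace

noncomputable section

/-- Evaluation of a multivariate polynomial at a point of Euclidean space `ℝⁿ`. -/
def peval {n : ℕ} (p : MvPolynomial (Fin n) ℝ) (x : EuclideanSpace ℝ (Fin n)) : ℝ :=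
  MvPolynomial.eval (fun i => x i) p

/-- The `L²(σ)` inner product `⟨f,g⟩ = ∫ f·g dσ` on polynomials. -/
def pinner {n : ℕ} (σ : Measure (EuclideanSpace ℝ (Fin n)))
    (f g : MvPolynomial (Fin n) ℝ) : ℝ :=
  ∫ x, peval f x * peval g x ∂σ

/-- `μ` is a rotation-invariant probability measure concentrated on the unit sphere. -/
def IsRotInvSphereProb {E : Type*} [NormedAddCommGroup E] [NormedSpace ℝ E]
    [MeasurableSpace E] (μ : Measure E) : Prop :=
  IsProbabilityMeasure μ ∧ μ (Metric.sphere (0 : E) 1)ᶜ = 0 ∧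
    ∀ T : E ≃ₗᵢ[ℝ] E, Measure.map T μ = μ

/-- The hyperplane `M` of forms of degree `2k` with integral `0` on the sphere. -/
def Mset (n k : ℕ) (σ : Measure (EuclideanSpace ℝ (Fin n))) :
    Set (MvPolynomial (Fin n) ℝ) :=
  {f | f.IsHomogeneous (2 * k) ∧ ∫ x, peval f x ∂σ = 0}

/-- The form `r^{2k} = (x₁² + ⋯ + xₙ²)^k`. -/
def rSq (n k : ℕ) : MvPolynomial (Fin n) ℝ :=
  (∑ i : Fin n, X i ^ 2) ^ k

/-- The cone `C` of nonnegative forms of degree `2k`. -/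
def Cset (n k : ℕ) : Set (MvPolynomial (Fin n) ℝ) :=
  {f | f.IsHomogeneous (2 * k) ∧ ∀ x : EuclideanSpace ℝ (Fin n), 0 ≤ peval f x}

/-- The cone `Sq` of sums of squares of forms of degree `k`. -/
def Sqset (n k : ℕ) : Set (MvPolynomial (Fin n) ℝ) :=
  {f | ∃ (m : ℕ) (g : Fin m → MvPolynomial (Fin n) ℝ),
    (∀ i, (g i).IsHomogeneous k) ∧ f = ∑ i, g i ^ 2}

/-- The compact base `C̃ = {f ∈ M : f + r^{2k} ∈ C}`. -/
def Ctilde (n k : ℕ) (σ : Measure (EuclideanSpace ℝ (Fin n))) :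
    Set (MvPolynomial (Fin n) ℝ) :=
  {f ∈ Mset n k σ | f + rSq n k ∈ Cset n k}

/-- The compact base `S̃q = {f ∈ M : f + r^{2k} ∈ Sq}`. -/
def Sqtilde (n k : ℕ) (σ : Measure (EuclideanSpace ℝ (Fin n))) :
    Set (MvPolynomial (Fin n) ℝ) :=
  {f ∈ Mset n k σ | f + rSq n k ∈ Sqset n k}

/-- `φ` is a linear isometry (w.r.t. the `L²(σ)` inner product) identifying Euclidean
`D`-space with the hyperplane `M`; in particular `D = D_M = dim M`. -/
def IsCoordOfM (n k D : ℕ) (σ : Measure (EuclideanSpace ℝ (Fin n)))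
    (φ : EuclideanSpace ℝ (Fin D) →ₗ[ℝ] MvPolynomial (Fin n) ℝ) : Prop :=
  Function.Injective φ ∧ Set.range φ = Mset n k σ ∧
    ∀ y z : EuclideanSpace ℝ (Fin D), pinner σ (φ y) (φ z) = ⟪y, z⟫

/-- The `L^∞` norm of a polynomial on the unit sphere `S^{n-1}`. -/
def supNorm {n : ℕ} (f : MvPolynomial (Fin n) ℝ) : ℝ :=
  sSup ((fun x => |peval f x|) '' Metric.sphere (0 : EuclideanSpace ℝ (Fin n)) 1)

/-- The norm `‖f‖_sq = max {|⟨f, g²⟩| : g ∈ P_{n,k}, ⟨g,g⟩ = 1}`. -/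
def sqNorm {n : ℕ} (k : ℕ) (σ : Measure (EuclideanSpace ℝ (Fin n)))
    (f : MvPolynomial (Fin n) ℝ) : ℝ :=
  sSup ((fun g => |pinner σ f (g ^ 2)|) ''
    {g : MvPolynomial (Fin n) ℝ | g.IsHomogeneous k ∧ pinner σ g g = 1})

lemma continuous_peval {n : ℕ} (p : MvPolynomial (Fin n) ℝ) : Continuous (peval p) := by
  unfold peval
  exact (MvPolynomial.continuous_eval p).comp (by fun_prop)

lemma integrable_peval {n : ℕ} {σ : Measure (EuclideanSpace ℝ (Fin n))}
    (hσ : IsRotInvSphereProb σ) (p : MvPolynomial (Fin n) ℝ) : Integrable (peval p) σ := by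
  obtain ⟨hp, hs, -⟩ := hσ
  have h : IntegrableOn (peval p) (Metric.sphere 0 1) σ :=
    (continuous_peval p).continuousOn.integrableOn_compact (isCompact_sphere 0 1)
  have hr : σ.restrict (Metric.sphere 0 1) = σ :=
    Measure.restrict_eq_self_of_ae_mem (mem_ae_iff.2 hs)
  rwa [IntegrableOn, hr] at h

lemma integral_rSq {n k : ℕ} {σ : Measure (EuclideanSpace ℝ (Fin n))}
    (hσ : IsRotInvSphereProb σ) : ∫ x, peval (rSq n k) x ∂σ = 1 := by
  obtain ⟨hp, hs, -⟩ := hσ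
  have h : peval (rSq n k) =ᵐ[σ] fun _ => 1 := by
    filter_upwards [mem_ae_iff.2 hs] with x hx
    have hx' : ‖x‖ = 1 := by simpa using hx
    have h2 : ∑ i, x i ^ 2 = 1 := by rw [← EuclideanSpace.real_norm_sq_eq, hx', one_pow]
    simp [peval, rSq, h2]
  rw [integral_congr_ae h]
  simp

lemma isHomogeneous_rSq (n k : ℕ) : (rSq n k).IsHomogeneous (2 * k) :=
  (IsHomogeneous.sum _ _ _ fun i _ => isHomogeneous_X_pow i 2).pow k

lemma integral_weighted {n m : ℕ} (k : ℕ) {σ : Measure (EuclideanSpace ℝ (Fin n))}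
    (hσ : IsRotInvSphereProb σ) (g : Fin m → MvPolynomial (Fin n) ℝ) (v : Fin m → ℝ) :
    ∫ x, peval (∑ i, C (v i) * g i ^ 2 - rSq n k) x ∂σ
      = ∑ i, v i * ∫ x, peval (g i) x ^ 2 ∂σ - 1 := by
  have hi : ∀ i, Integrable (fun x => peval (g i) x ^ 2) σ := fun i => by
    have he : (fun x => peval (g i) x ^ 2) = peval (g i ^ 2) := by
      ext x
      simp [peval]
    exact he ▸ integrable_peval hσ (g i ^ 2)
  have he : ∀ x, peval (∑ i, C (v i) * g i ^ 2 - rSq n k) x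
      = ∑ i, v i * peval (g i) x ^ 2 - peval (rSq n k) x := fun x => by simp [peval]
  simp_rw [he]
  rw [integral_sub (integrable_finsetSum _ fun i _ => (hi i).const_mul _) (integrable_peval hσ _),
    integral_finsetSum _ fun i _ => (hi i).const_mul _, integral_rSq hσ]
  simp_rw [integral_const_mul]

/-- Reweighting the squares in a sum-of-squares representation stays in `S̃q` as long as the weights
are nonnegative and the total integral stays `1`. -/
lemma weighted_mem_Sqtilde {n k m : ℕ} {σ : Measure (EuclideanSpace ℝ (Fin n))}
    (hσ : IsRotInvSphereProb σ) {g : Fin m → MvPolynomial (Fin n) ℝ}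
    (hg : ∀ i, (g i).IsHomogeneous k) {v : Fin m → ℝ} (hv : ∀ i, 0 ≤ v i)
    (hsum : ∑ i, v i * ∫ x, peval (g i) x ^ 2 ∂σ = 1) :
    ∑ i, C (v i) * g i ^ 2 - rSq n k ∈ Sqtilde n k σ := by
  refine ⟨⟨IsHomogeneous.sub (IsHomogeneous.sum _ _ _ fun i _ => ?_) (isHomogeneous_rSq n k), ?_⟩,
    m, fun i => C √(v i) * g i, fun i => (hg i).C_mul _, ?_⟩
  · rw [mul_comm 2 k]
    exact ((hg i).pow 2).C_mul _
  · rw [integral_weighted k hσ, hsum, sub_self]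
  · simp [mul_pow, ← C_pow, Real.sq_sqrt (hv _)]

/-- Every extreme point of S̃q is of the form g² - r^{2k} with g ∈ P_{n,k} of
unit L²(σ) norm. -/
theorem extreme_points_of_sqtilde
    (n k : ℕ) (hn : 1 ≤ n) (hk : 1 ≤ k)
    (σ : Measure (EuclideanSpace ℝ (Fin n))) (hσ : IsRotInvSphereProb σ)
    (f : MvPolynomial (Fin n) ℝ) (hf : f ∈ Set.extremePoints ℝ (Sqtilde n k σ)) :
    ∃ g : MvPolynomial (Fin n) ℝ, g.IsHomogeneous k ∧
      (∫ x, peval g x ^ 2 ∂σ) = 1 ∧ f = g ^ 2 - rSq n k := by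
  obtain ⟨⟨⟨-, hint⟩, m, g, hg, hfg⟩, hext⟩ := hf
  set a : Fin m → ℝ := fun i => ∫ x, peval (g i) x ^ 2 ∂σ with ha
  have ha0 : ∀ i, 0 ≤ a i := fun i => integral_nonneg fun x => sq_nonneg _
  have hf1 : f = ∑ i, C ((1 : Fin m → ℝ) i) * g i ^ 2 - rSq n k := by simp [← hfg]
  have hsum : ∑ i, a i = 1 := by
    rw [hf1, integral_weighted k hσ] at hint
    simp only [Pi.one_apply, one_mul] at hint
    linarith
  obtain ⟨j, hj⟩ : ∃ j, 0 < a j := by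
    by_contra! h
    linarith [Finset.sum_nonpos fun i (_ : i ∈ Finset.univ) => h i]
  have hj1 : a j ≤ 1 := hsum ▸ Finset.single_le_sum (fun i _ => ha0 i) (Finset.mem_univ j)
  have ht : 0 < 1 - a j / 2 := by linarith
  -- `1 = t v + (1 - t) w` with `t = a j / 2`, both weights having total integral `1`
  let v : Fin m → ℝ := fun i => if i = j then (a j)⁻¹ else 0
  let w : Fin m → ℝ := fun i => (1 - if i = j then 1 / 2 else 0) / (1 - a j / 2)
  have hv : ∑ i, C (v i) * g i ^ 2 - rSq n k ∈ Sqtilde n k σ := by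
    refine weighted_mem_Sqtilde hσ hg (fun i => ?_) ?_
    · dsimp only [v]; split_ifs <;> positivity
    · simp only [v, ite_mul, zero_mul, Finset.sum_ite_eq', Finset.mem_univ, if_true]
      exact inv_mul_cancel₀ hj.ne'
  have hw : ∑ i, C (w i) * g i ^ 2 - rSq n k ∈ Sqtilde n k σ := by
    refine weighted_mem_Sqtilde hσ hg (fun i => ?_) ?_
    · refine div_nonneg ?_ ht.le
      split_ifs <;> norm_num
    · change ∑ i, w i * a i = 1
      simp only [w, div_mul_eq_mul_div, ← Finset.sum_div, sub_mul, ite_mul, zero_mul, one_mul,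
        Finset.sum_sub_distrib, hsum, Finset.sum_ite_eq', Finset.mem_univ, if_true]
      rw [div_eq_one_iff_eq ht.ne']
  have hvw : ∀ i, a j / 2 * v i + (1 - a j / 2) * w i = 1 := fun i => by
    dsimp only [v, w]
    rw [mul_div_cancel₀ _ ht.ne']
    split_ifs
    · field_simp
      norm_num
    · ring
  have key := hext hv hw ⟨a j / 2, 1 - a j / 2, by positivity, ht, by ring, by
    have hr : (a j / 2) • rSq n k + (1 - a j / 2) • rSq n k = rSq n k := by
      rw [← add_smul, add_sub_cancel, one_smul]
    rw [hf1, smul_sub, smul_sub, sub_add_sub_comm, hr, Finset.smul_sum, Finset.smul_sum,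
      ← Finset.sum_add_distrib]
    congr 1
    refine Finset.sum_congr rfl fun i _ => ?_
    rw [smul_eq_C_mul, smul_eq_C_mul, ← mul_assoc, ← mul_assoc, ← add_mul, ← C_mul, ← C_mul,
      ← C_add, hvw, Pi.one_apply]⟩
  have hs : √(a j)⁻¹ ^ 2 = (a j)⁻¹ := Real.sq_sqrt (by positivity)
  refine ⟨C √(a j)⁻¹ * g j, (hg j).C_mul _, ?_, ?_⟩
  · have he : ∀ x, peval (C √(a j)⁻¹ * g j) x ^ 2 = (a j)⁻¹ * peval (g j) x ^ 2 := fun x => by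
      rw [← hs]
      simp [peval, mul_pow]
    simp_rw [he]
    rw [integral_const_mul]
    exact inv_mul_cancel₀ hj.ne'
  · rw [← key, mul_pow, ← C_pow, hs]
    simp [v, apply_ite C, ite_mul]

end
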